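/- Let 0 < α < 1 and let μ be a finite positive Borel measure on [0,1) which is an α-logarithmic 1-Carleson measure. Then there exists a constant C > 0 such that for every f in the Hardy space H^1, the function I_μ f(z) = ∫_{[0,1)} f(t)/(1 - t z) dμ(t) is a well-defined analytic function in the unit disc 𝔻 and satisfies ∫_𝔻 |(I_μ f)′(z)| (log(2/(1−|z|)))^{α−1} dA(z) ≤ C ‖f‖_{H^1}; in particular I_μ f belongs to the space 𝒟^1(log^{α−1}). -/

import Mathlib

open MeasureTheory Set Metric Filter Asymptotics
open scoped ENNReal

/-- Normalized area measure on `ℂ`: Lebesgue area divided by `π`,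
so that the unit disc has total mass `1`. -/
noncomputable def dA : Measure ℂ := (ENNReal.ofReal Real.pi)⁻¹ • volume

/-- The (weighted) Bergman norm `‖f‖_{A^p_α} = ((α+1) ∫_𝔻 (1-|z|²)^α |f(z)|^p dA)^{1/p}`,
as an extended real number. -/
noncomputable def bergmanNorm (p α : ℝ) (f : ℂ → ℂ) : ℝ≥0∞ :=
  (ENNReal.ofReal (α + 1) *
    ∫⁻ z in ball (0 : ℂ) 1, ENNReal.ofReal ((1 - ‖z‖ ^ 2) ^ α * ‖f z‖ ^ p) ∂dA) ^ (1 / p)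

/-- The Dirichlet-type norm `‖f‖_{𝒟^p_α} = |f(0)| + ‖f′‖_{A^p_α}`. -/
noncomputable def dirichletNorm (p α : ℝ) (f : ℂ → ℂ) : ℝ≥0∞ :=
  ENNReal.ofReal ‖f 0‖ + bergmanNorm p α (deriv f)

/-- The Hardy `H^1` norm `sup_{0 ≤ r < 1} (2π)⁻¹ ∫_0^{2π} |f(re^{iθ})| dθ`. -/
noncomputable def hardyNorm (f : ℂ → ℂ) : ℝ≥0∞ :=
  ⨆ r ∈ Ico (0 : ℝ) 1,
    (ENNReal.ofReal (2 * Real.pi))⁻¹ *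
      ∫⁻ θ in Ioc (0 : ℝ) (2 * Real.pi),
        ENNReal.ofReal ‖f ((r : ℂ) * Complex.exp ((θ : ℂ) * Complex.I))‖

/-- The operator `I_μ f(z) = ∫_{[0,1)} f(t)/(1-tz) dμ(t)`. -/
noncomputable def Imu (μ : Measure ℝ) (f : ℂ → ℂ) (z : ℂ) : ℂ :=
  ∫ t : ℝ, f (t : ℂ) / (1 - (t : ℂ) * z) ∂μ

/-- The moment of order `n` of `μ`. -/
noncomputable def moment (μ : Measure ℝ) (n : ℕ) : ℝ := ∫ t : ℝ, t ^ n ∂μ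

/-- `M_∞(r, f) = sup_{|z| = r} |f(z)|`. -/
noncomputable def Minf (f : ℂ → ℂ) (r : ℝ) : ℝ := ⨆ z ∈ sphere (0 : ℂ) r, ‖f z‖

open scoped NNReal

/-!
Multiplying `μ` by `(log (2 / (1 - t))) ^ α` yields a Carleson measure `ν` on the radius, since the
logarithm grows more slowly than any power of `1 / (1 - t)`. For such `ν`, Hilbert's inequality for
the Taylor coefficients of `G` bounds `∫ |G|² dν` by the mean of `|G|²` over the unit circle. A
polynomial `f` has an outer square root `G`: moving its zeros out of the disc through Blaschke
factors gives `|f| ≤ |G|²` on the disc, with equality on the circle, so that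
`∫ |f| dν ≲ ‖f‖_{H¹}`. Differentiating `I_μ f` under the integral sign and exchanging the order of
integration, it remains to see that `∫_𝔻 (log (2 / (1 - |z|))) ^ (α - 1) / |1 - t z|² dA(z)` is at
most a multiple of `(log (2 / (1 - t))) ^ α`; because the Poisson kernel has mean `1` on circles,
this is a one-dimensional integral.
-/

section Domination

variable {μ ν : Measure ℝ} {a b : ℝ}

theorem measure_le_of_measure_Ico_le {S : Set ℝ} (hS : S ⊆ Ico a b)
    (hup : ∀ s ∈ S, Ico s b ⊆ S) (h : ∀ t ∈ Ico a b, μ (Ico t b) ≤ ν (Ico t b)) : μ S ≤ ν S := by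
  rcases S.eq_empty_or_nonempty with rfl | hne
  · simp only [measure_empty, le_refl]
  have hbdd : BddBelow S := ⟨a, fun s hs => (hS hs).1⟩
  by_cases hmin : sInf S ∈ S
  · have hS_eq : S = Ico (sInf S) b :=
      Subset.antisymm (fun s hs => ⟨csInf_le hbdd hs, (hS hs).2⟩) (hup _ hmin)
    rw [hS_eq]
    exact h _ (hS hmin)
  obtain ⟨u, hu_anti, hu_tendsto, hu_mem⟩ := exists_seq_tendsto_sInf hne hbdd
  have hS_eq : S = ⋃ n, Ico (u n) b := by
    refine Subset.antisymm (fun s hs => ?_) (iUnion_subset fun n => hup _ (hu_mem n))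
    have hlt : sInf S < s :=
      (csInf_le hbdd hs).lt_of_ne fun heq => hmin (heq ▸ hs)
    obtain ⟨n, hn⟩ := (hu_tendsto.eventually_lt_const hlt).exists
    exact mem_iUnion.2 ⟨n, hn.le, (hS hs).2⟩
  have hmono : Monotone fun n => Ico (u n) b := fun m n hmn => Ico_subset_Ico_left (hu_anti hmn)
  rw [hS_eq, hmono.measure_iUnion, hmono.measure_iUnion]
  exact iSup_mono fun n => h _ (hS (hu_mem n))

theorem setLIntegral_le_of_measure_Ico_le {g : ℝ → ℝ} (hg : MonotoneOn g (Ico a b))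
    (hg₀ : ∀ t ∈ Ico a b, 0 ≤ g t) (h : ∀ t ∈ Ico a b, μ (Ico t b) ≤ ν (Ico t b)) :
    ∫⁻ t in Ico a b, ENNReal.ofReal (g t) ∂μ ≤ ∫⁻ t in Ico a b, ENNReal.ofReal (g t) ∂ν := by
  have hnonneg (κ : Measure ℝ) : 0 ≤ᵐ[κ.restrict (Ico a b)] g :=
    (ae_restrict_mem measurableSet_Ico).mono hg₀
  have hmeas (κ : Measure ℝ) : AEMeasurable g (κ.restrict (Ico a b)) :=
    aemeasurable_restrict_of_monotoneOn measurableSet_Ico hg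
  rw [lintegral_eq_lintegral_meas_lt _ (hnonneg μ) (hmeas μ),
    lintegral_eq_lintegral_meas_lt _ (hnonneg ν) (hmeas ν)]
  refine lintegral_mono fun s => ?_
  rw [Measure.restrict_apply' measurableSet_Ico, Measure.restrict_apply' measurableSet_Ico]
  refine measure_le_of_measure_Ico_le inter_subset_right ?_ h
  rintro t ⟨hst, ht⟩ u hu
  have hu' : u ∈ Ico a b := ⟨ht.1.trans hu.1, hu.2⟩
  exact ⟨lt_of_lt_of_le hst (hg ht hu' hu.1), hu'⟩

end Domination

/-- `ν` is a Carleson measure on the radius `[0, 1)`, with constant `C`: the mass of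
`[t, 1)` is at most `C (1 - t)`. -/
def IsRadialCarleson (C : ℝ≥0) (ν : Measure ℝ) : Prop :=
  ∀ t ∈ Ico (0 : ℝ) 1, ν (Ico t 1) ≤ C * ENNReal.ofReal (1 - t)

theorem IsRadialCarleson.lintegral_pow_le {C : ℝ≥0} {ν : Measure ℝ} (hν : IsRadialCarleson C ν)
    (k : ℕ) : ∫⁻ t in Ico 0 1, ENNReal.ofReal (t ^ k) ∂ν ≤ C * ((k : ℝ≥0∞) + 1)⁻¹ := by
  have hpow : ∫⁻ t in Ico (0 : ℝ) 1, ENNReal.ofReal (t ^ k) = ((k : ℝ≥0∞) + 1)⁻¹ := by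
    rw [← ofReal_integral_eq_lintegral_ofReal]
    · rw [integral_Ico_eq_integral_Ioc, ← intervalIntegral.integral_of_le zero_le_one,
        integral_pow, one_pow, zero_pow k.succ_ne_zero, sub_zero, one_div,
        ENNReal.ofReal_inv_of_pos (by positivity)]
      norm_cast
    · exact (continuous_pow k).continuousOn.integrableOn_Icc.mono_set Ico_subset_Icc_self
    · filter_upwards [ae_restrict_mem measurableSet_Ico] with t ht using pow_nonneg ht.1 k
  calc ∫⁻ t in Ico 0 1, ENNReal.ofReal (t ^ k) ∂ν
      ≤ ∫⁻ t in Ico 0 1, ENNReal.ofReal (t ^ k) ∂((C : ℝ≥0∞) • volume) := by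
        refine setLIntegral_le_of_measure_Ico_le
          (fun s hs t _ hst => pow_le_pow_left₀ hs.1 hst k) (fun t ht => pow_nonneg ht.1 k)
          fun t ht => ?_
        simpa only [Measure.smul_apply, Real.volume_Ico, smul_eq_mul] using hν t ht
    _ = C * ((k : ℝ≥0∞) + 1)⁻¹ := by
        rw [Measure.restrict_smul, lintegral_smul_measure, hpow, smul_eq_mul]

theorem mul_le_sq_mul_add_sq_mul_inv (x y : ℝ≥0∞) {q : ℝ≥0∞} (hq₀ : q ≠ 0) (hq : q ≠ ⊤) :
    x * y ≤ x ^ 2 * q + y ^ 2 * q⁻¹ := by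
  rcases le_total y (x * q) with hle | hle
  · calc x * y ≤ x * (x * q) := by gcongr
      _ = x ^ 2 * q := by ring
      _ ≤ _ := le_self_add
  · have hx : x ≤ y * q⁻¹ := by
      rwa [← div_eq_mul_inv, ENNReal.le_div_iff_mul_le (Or.inl hq₀) (Or.inl hq)]
    calc x * y ≤ y * q⁻¹ * y := by gcongr
      _ = y ^ 2 * q⁻¹ := by ring
      _ ≤ _ := le_add_self

theorem tsum_tsum_mul_le_of_schur {ι : Type*} {K : ι → ι → ℝ≥0∞} (hK : ∀ i j, K i j = K j i)
    {w : ι → ℝ≥0∞} (hw₀ : ∀ i, w i ≠ 0) (hw : ∀ i, w i ≠ ⊤) {A : ℝ≥0∞}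
    (hA : ∀ i, ∑' j, K i j * w j ≤ A * w i) (b : ι → ℝ≥0∞) :
    ∑' i, ∑' j, K i j * (b i * b j) ≤ 2 * A * ∑' i, b i ^ 2 := by
  have hhalf : ∑' i, ∑' j, K i j * (b i ^ 2 * (w j * (w i)⁻¹)) ≤ A * ∑' i, b i ^ 2 := by
    rw [← ENNReal.tsum_mul_left]
    refine ENNReal.tsum_le_tsum fun i => ?_
    calc ∑' j, K i j * (b i ^ 2 * (w j * (w i)⁻¹))
        = b i ^ 2 * (w i)⁻¹ * ∑' j, K i j * w j := by
          rw [← ENNReal.tsum_mul_left]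
          exact tsum_congr fun j => by ring
      _ ≤ b i ^ 2 * (w i)⁻¹ * (A * w i) := by gcongr; exact hA i
      _ = A * b i ^ 2 * ((w i)⁻¹ * w i) := by ring
      _ = A * b i ^ 2 := by rw [ENNReal.inv_mul_cancel (hw₀ i) (hw i), mul_one]
  have hyoung (i j : ι) : K i j * (b i * b j) ≤
      K i j * (b i ^ 2 * (w j * (w i)⁻¹)) + K j i * (b j ^ 2 * (w i * (w j)⁻¹)) := by
    rw [hK j i, ← mul_add]
    gcongr
    have hinv : (w j * (w i)⁻¹)⁻¹ = w i * (w j)⁻¹ := by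
      rw [ENNReal.mul_inv (Or.inl (hw₀ j)) (Or.inl (hw j)), inv_inv, mul_comm]
    rw [← hinv]
    exact mul_le_sq_mul_add_sq_mul_inv _ _
      (mul_ne_zero (hw₀ j) (ENNReal.inv_ne_zero.2 (hw i)))
      (ENNReal.mul_ne_top (hw j) (ENNReal.inv_ne_top.2 (hw₀ i)))
  calc ∑' i, ∑' j, K i j * (b i * b j)
      ≤ ∑' i, ∑' j, (K i j * (b i ^ 2 * (w j * (w i)⁻¹)) +
          K j i * (b j ^ 2 * (w i * (w j)⁻¹))) :=
        ENNReal.tsum_le_tsum fun i => ENNReal.tsum_le_tsum fun j => hyoung i j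
    _ = (∑' i, ∑' j, K i j * (b i ^ 2 * (w j * (w i)⁻¹))) +
          ∑' i, ∑' j, K j i * (b j ^ 2 * (w i * (w j)⁻¹)) := by
        simp only [ENNReal.tsum_add]
    _ ≤ A * ∑' i, b i ^ 2 + A * ∑' i, b i ^ 2 := by
        rw [ENNReal.tsum_comm (f := fun i j => K j i * (b j ^ 2 * (w i * (w j)⁻¹)))]
        gcongr
    _ = 2 * A * ∑' i, b i ^ 2 := by ring

theorem inv_mul_sqrt_le_sub {N x : ℝ} (hN : 1 ≤ N) (hx : 0 ≤ x) :
    (N + x)⁻¹ * (√(x + 1))⁻¹ ≤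
      8 / √N * (√(x + 1) / (√N + √(x + 1)) - √x / (√N + √x)) := by
  obtain ⟨s, hs, hsN⟩ : ∃ s, s = √N ∧ s ^ 2 = N := ⟨_, rfl, Real.sq_sqrt (by linarith)⟩
  obtain ⟨u, hu, hux⟩ : ∃ u, u = √x ∧ u ^ 2 = x := ⟨_, rfl, Real.sq_sqrt hx⟩
  obtain ⟨v, hv, hvx⟩ : ∃ v, v = √(x + 1) ∧ v ^ 2 = x + 1 :=
    ⟨_, rfl, Real.sq_sqrt (by linarith)⟩
  have hs₀ : 0 < s := hs ▸ Real.sqrt_pos.2 (by linarith)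
  have hv₀ : 0 < v := hv ▸ Real.sqrt_pos.2 (by linarith)
  have hu₀ : 0 ≤ u := hu ▸ Real.sqrt_nonneg x
  have huv : u ≤ v := by rw [hu, hv]; exact Real.sqrt_le_sqrt (by linarith)
  rw [← hs, ← hu, ← hv]
  have hdiff : 8 / s * (v / (s + v) - u / (s + u)) = 8 / ((s + v) * (s + u) * (u + v)) := by
    field_simp
    linear_combination s * (hvx - hux)
  rw [hdiff, ← mul_inv, ← one_div, div_le_div_iff₀ (by positivity) (by positivity), one_mul]
  have hquad : (s + v) * (s + u) ≤ 4 * (N + x) := by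
    nlinarith [sq_nonneg (s - v), mul_nonneg (add_pos hs₀ hv₀).le (sub_nonneg.2 huv)]
  calc (s + v) * (s + u) * (u + v) ≤ 4 * (N + x) * (2 * v) := by gcongr; linarith
    _ = 8 * ((N + x) * v) := by ring

theorem tsum_inv_mul_inv_sqrt_le (n : ℕ) :
    ∑' m : ℕ, ((n : ℝ≥0∞) + m + 1)⁻¹ * (ENNReal.ofReal √(m + 1))⁻¹ ≤
      8 * (ENNReal.ofReal √(n + 1))⁻¹ := by
  have hreal (m : ℕ) : ((n : ℝ≥0∞) + m + 1)⁻¹ * (ENNReal.ofReal √(m + 1))⁻¹ =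
      ENNReal.ofReal (((n + 1 : ℝ) + m)⁻¹ * (√(m + 1))⁻¹) := by
    rw [ENNReal.ofReal_mul (by positivity), ENNReal.ofReal_inv_of_pos (by positivity),
      ENNReal.ofReal_inv_of_pos (by positivity)]
    congr 2
    rw [add_right_comm]
    norm_cast
  have height : (8 : ℝ≥0∞) * (ENNReal.ofReal √(n + 1))⁻¹ = ENNReal.ofReal (8 / √(n + 1)) := by
    rw [div_eq_mul_inv, ENNReal.ofReal_mul (by norm_num),
      ENNReal.ofReal_inv_of_pos (by positivity), ENNReal.ofReal_ofNat]
  rw [height]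
  refine ENNReal.tsum_le_of_sum_range_le fun M => ?_
  simp only [hreal]
  rw [← ENNReal.ofReal_sum_of_nonneg fun m _ => by positivity]
  refine ENNReal.ofReal_le_ofReal ?_
  set Φ : ℕ → ℝ := fun m => √m / (√(n + 1) + √m) with hΦ
  calc ∑ m ∈ Finset.range M, ((n + 1 : ℝ) + m)⁻¹ * (√(m + 1))⁻¹
      ≤ ∑ m ∈ Finset.range M, 8 / √(n + 1) * (Φ (m + 1) - Φ m) := by
        refine Finset.sum_le_sum fun m _ => ?_
        simpa only [hΦ, Nat.cast_succ] using
          inv_mul_sqrt_le_sub (N := n + 1) (by linarith [n.cast_nonneg (α := ℝ)]) m.cast_nonneg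
    _ = 8 / √(n + 1) * Φ M := by
        rw [← Finset.mul_sum, Finset.sum_range_sub]
        simp only [hΦ, Nat.cast_zero, Real.sqrt_zero, zero_div, sub_zero]
    _ ≤ 8 / √(n + 1) := by
        refine mul_le_of_le_one_right (by positivity) (div_le_one_of_le₀ ?_ (by positivity))
        exact le_add_of_nonneg_left (Real.sqrt_nonneg _)

theorem hilbert_inequality (b : ℕ → ℝ≥0∞) :
    ∑' n : ℕ, ∑' m : ℕ, ((n : ℝ≥0∞) + m + 1)⁻¹ * (b n * b m) ≤ 16 * ∑' n, b n ^ 2 := by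
  have hw_pos (n : ℕ) : 0 < ENNReal.ofReal √(n + 1) := ENNReal.ofReal_pos.2 (by positivity)
  have h := tsum_tsum_mul_le_of_schur (fun n m => by rw [add_comm (n : ℝ≥0∞)])
    (fun n => ENNReal.inv_ne_zero.2 ENNReal.ofReal_ne_top)
    (fun n => ENNReal.inv_ne_top.2 (hw_pos n).ne') tsum_inv_mul_inv_sqrt_le b
  norm_num at h
  exact h

theorem IsRadialCarleson.lintegral_sq_tsum_le {C : ℝ≥0} {ν : Measure ℝ}
    (hν : IsRadialCarleson C ν) (b : ℕ → ℝ≥0∞) :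
    ∫⁻ t in Ico 0 1, (∑' n, b n * ENNReal.ofReal t ^ n) ^ 2 ∂ν ≤ 16 * C * ∑' n, b n ^ 2 := by
  have hexpand (t : ℝ) : (∑' n, b n * ENNReal.ofReal t ^ n) ^ 2 =
      ∑' n, ∑' m, b n * b m * ENNReal.ofReal t ^ (n + m) := by
    rw [sq, ← ENNReal.tsum_mul_right]
    refine tsum_congr fun n => ?_
    rw [← ENNReal.tsum_mul_left]
    exact tsum_congr fun m => by ring
  have hmoment (k : ℕ) :
      ∫⁻ t in Ico 0 1, ENNReal.ofReal t ^ k ∂ν ≤ C * ((k : ℝ≥0∞) + 1)⁻¹ := by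
    refine le_of_eq_of_le (setLIntegral_congr_fun measurableSet_Ico fun t ht => ?_)
      (hν.lintegral_pow_le k)
    exact (ENNReal.ofReal_pow ht.1 k).symm
  calc ∫⁻ t in Ico 0 1, (∑' n, b n * ENNReal.ofReal t ^ n) ^ 2 ∂ν
      = ∑' n, ∑' m, b n * b m * ∫⁻ t in Ico 0 1, ENNReal.ofReal t ^ (n + m) ∂ν := by
        simp only [hexpand]
        rw [lintegral_tsum fun n => by fun_prop]
        refine tsum_congr fun n => ?_
        rw [lintegral_tsum fun m => by fun_prop]
        exact tsum_congr fun m => lintegral_const_mul _ (by fun_prop)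
    _ ≤ ∑' n : ℕ, ∑' m : ℕ, C * (((n : ℝ≥0∞) + m + 1)⁻¹ * (b n * b m)) := by
        refine ENNReal.tsum_le_tsum fun n => ENNReal.tsum_le_tsum fun m => ?_
        calc b n * b m * ∫⁻ t in Ico 0 1, ENNReal.ofReal t ^ (n + m) ∂ν
            ≤ b n * b m * (C * (((n + m : ℕ) : ℝ≥0∞) + 1)⁻¹) := by gcongr; exact hmoment _
          _ = C * (((n : ℝ≥0∞) + m + 1)⁻¹ * (b n * b m)) := by push_cast; ring
    _ = C * ∑' n : ℕ, ∑' m : ℕ, ((n : ℝ≥0∞) + m + 1)⁻¹ * (b n * b m) := by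
        simp only [ENNReal.tsum_mul_left]
    _ ≤ C * (16 * ∑' n, b n ^ 2) := by gcongr; exact hilbert_inequality b
    _ = 16 * C * ∑' n, b n ^ 2 := by ring

/-- The integral mean `M₁(r, f) = (2π)⁻¹ ∫_0^{2π} |f(r e^{iθ})| dθ`, valued in `[0, ∞]`. The mean
of `|f|²` is the integral mean of `f ^ 2`. -/
noncomputable def integralMean (r : ℝ) (f : ℂ → ℂ) : ℝ≥0∞ :=
  (ENNReal.ofReal (2 * Real.pi))⁻¹ * ∫⁻ θ in Ioc 0 (2 * Real.pi), ‖f (circleMap 0 r θ)‖ₑ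

theorem integralMean_le_hardyNorm (f : ℂ → ℂ) {r : ℝ} (hr : r ∈ Ico (0 : ℝ) 1) :
    integralMean r f ≤ hardyNorm f := by
  refine le_iSup₂_of_le r hr (le_of_eq ?_)
  simp only [integralMean, circleMap_zero, ofReal_norm]

theorem integralMean_le_add {f g : ℂ → ℂ} {r : ℝ} {ε : ℝ≥0∞}
    (h : ∀ z ∈ sphere (0 : ℂ) |r|, ‖f z‖ₑ ≤ ‖g z‖ₑ + ε) :
    integralMean r f ≤ integralMean r g + ε := by
  have h2pi : ENNReal.ofReal (2 * Real.pi) ≠ 0 :=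
    (ENNReal.ofReal_pos.2 Real.two_pi_pos).ne'
  calc integralMean r f
      ≤ (ENNReal.ofReal (2 * Real.pi))⁻¹ *
          ∫⁻ θ in Ioc 0 (2 * Real.pi), (‖g (circleMap 0 r θ)‖ₑ + ε) := by
        unfold integralMean
        gcongr with θ
        exact h _ (circleMap_mem_sphere' 0 r θ)
    _ = integralMean r g + ε := by
        rw [lintegral_add_right _ measurable_const, setLIntegral_const, Real.volume_Ioc, sub_zero,
          mul_add, mul_left_comm, ENNReal.inv_mul_cancel h2pi ENNReal.ofReal_ne_top, mul_one]
        rfl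

theorem fourierCoeffOn_circleMap_eq_cauchyPowerSeries (G : ℂ → ℂ) (n : ℕ) :
    fourierCoeffOn Real.two_pi_pos (fun θ => G (circleMap 0 1 θ)) n =
      (cauchyPowerSeries G 0 1).coeff n := by
  rw [fourierCoeffOn_eq_integral, FormalMultilinearSeries.coeff, Pi.one_def,
    cauchyPowerSeries_apply, circleIntegral]
  simp only [deriv_circleMap, fourier_coe_apply]
  rw [← intervalIntegral.integral_smul, ← intervalIntegral.integral_smul]
  refine intervalIntegral.integral_congr fun θ _ => ?_
  have hexp : Complex.exp (2 * Real.pi * Complex.I * ((-n : ℤ) : ℂ) * θ /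
      ((2 * Real.pi - 0 : ℝ) : ℂ)) = (circleMap 0 1 θ)⁻¹ ^ n := by
    rw [circleMap_zero, Complex.ofReal_one, one_mul, ← Complex.exp_neg, ← Complex.exp_nat_mul]
    congr 1
    have := Complex.ofReal_ne_zero.2 Real.pi_ne_zero
    push_cast
    field_simp
    ring
  have hne : circleMap 0 1 θ ≠ 0 := circleMap_ne_center one_ne_zero
  have := Complex.ofReal_ne_zero.2 Real.pi_ne_zero
  simp only [hexp]
  simp only [smul_eq_mul, Complex.real_smul, sub_zero, one_div]
  push_cast
  field_simp

theorem tsum_sq_cauchyPowerSeries_le {G : ℂ → ℂ} (hG : ContinuousOn G (sphere 0 1)) :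
    ∑' n : ℕ, ‖(cauchyPowerSeries G 0 1).coeff n‖ₑ ^ 2 ≤ integralMean 1 (fun z => G z ^ 2) := by
  have hcont : Continuous fun θ => G (circleMap 0 1 θ) :=
    hG.comp_continuous (continuous_circleMap 0 1) fun θ => circleMap_mem_sphere 0 zero_le_one θ
  have hcont_sq : Continuous fun θ => ‖G (circleMap 0 1 θ)‖ ^ 2 := hcont.norm.pow 2
  have hL2 : MemLp (fun θ => G (circleMap 0 1 θ)) 2 (volume.restrict (Ioc 0 (2 * Real.pi))) := by
    obtain ⟨M, hM⟩ := (isCompact_sphere (0 : ℂ) 1).exists_bound_of_continuousOn hG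
    exact MemLp.of_bound hcont.aestronglyMeasurable M
      (ae_of_all _ fun θ => hM _ (circleMap_mem_sphere 0 zero_le_one θ))
  have hparseval := hasSum_sq_fourierCoeffOn Real.two_pi_pos hL2
  have hmean : ENNReal.ofReal ((2 * Real.pi - 0)⁻¹ •
      ∫ θ in (0)..(2 * Real.pi), ‖G (circleMap 0 1 θ)‖ ^ 2) =
      integralMean 1 (fun z => G z ^ 2) := by
    rw [sub_zero, smul_eq_mul, ENNReal.ofReal_mul (by positivity),
      ENNReal.ofReal_inv_of_pos Real.two_pi_pos, intervalIntegral.integral_of_le Real.two_pi_pos.le,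
      ofReal_integral_eq_lintegral_ofReal hcont_sq.integrableOn_Ioc
        (ae_of_all _ fun θ => sq_nonneg _)]
    simp only [integralMean, ← norm_pow, ofReal_norm]
  calc ∑' n : ℕ, ‖(cauchyPowerSeries G 0 1).coeff n‖ₑ ^ 2
      = ∑' n : ℕ, ENNReal.ofReal
          (‖fourierCoeffOn Real.two_pi_pos (fun θ => G (circleMap 0 1 θ)) (n : ℤ)‖ ^ 2) := by
        simp only [fourierCoeffOn_circleMap_eq_cauchyPowerSeries,
          ENNReal.ofReal_pow (norm_nonneg _), ofReal_norm]
    _ ≤ ∑' n : ℤ, ENNReal.ofReal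
          (‖fourierCoeffOn Real.two_pi_pos (fun θ => G (circleMap 0 1 θ)) n‖ ^ 2) :=
        ENNReal.tsum_comp_le_tsum_of_injective Nat.cast_injective _
    _ = integralMean 1 (fun z => G z ^ 2) := by
        rw [← ENNReal.ofReal_tsum_of_nonneg (fun n => sq_nonneg _) hparseval.summable,
          hparseval.tsum_eq, hmean]

theorem IsRadialCarleson.lintegral_sq_le {C : ℝ≥0} {ν : Measure ℝ} (hν : IsRadialCarleson C ν)
    {G : ℂ → ℂ} (hG : DiffContOnCl ℂ G (ball 0 1)) :
    ∫⁻ t in Ico (0 : ℝ) 1, ‖G t‖ₑ ^ 2 ∂ν ≤ 16 * C * integralMean 1 (fun z => G z ^ 2) := by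
  set a : ℕ → ℂ := (cauchyPowerSeries G 0 1).coeff
  have hG_le (t : ℝ) (ht : t ∈ Ico (0 : ℝ) 1) :
      ‖G t‖ₑ ≤ ∑' n, ‖a n‖ₑ * ENNReal.ofReal t ^ n := by
    have ht_ball : (t : ℂ) ∈ eball 0 1 := by
      rw [← ENNReal.ofReal_one, eball_ofReal, mem_ball_zero_iff, Complex.norm_of_nonneg ht.1]
      exact ht.2
    have hsum := (DiffContOnCl.hasFPowerSeriesOnBall (R := 1) hG one_pos).hasSum ht_ball
    simp only [zero_add, FormalMultilinearSeries.apply_eq_pow_smul_coeff] at hsum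
    calc ‖G t‖ₑ = ‖∑' n, (t : ℂ) ^ n • a n‖ₑ := by rw [← hsum.tsum_eq]; rfl
      _ ≤ ∑' n, ‖(t : ℂ) ^ n • a n‖ₑ := enorm_tsum_le_tsum_enorm
      _ = ∑' n, ‖a n‖ₑ * ENNReal.ofReal t ^ n := by
        refine tsum_congr fun n => ?_
        rw [enorm_smul, enorm_pow, ← ofReal_norm (t : ℂ), Complex.norm_of_nonneg ht.1, mul_comm]
  calc ∫⁻ t in Ico (0 : ℝ) 1, ‖G t‖ₑ ^ 2 ∂ν
      ≤ ∫⁻ t in Ico (0 : ℝ) 1, (∑' n, ‖a n‖ₑ * ENNReal.ofReal t ^ n) ^ 2 ∂ν :=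
        setLIntegral_mono' measurableSet_Ico fun t ht => by gcongr; exact hG_le t ht
    _ ≤ 16 * C * ∑' n, ‖a n‖ₑ ^ 2 := hν.lintegral_sq_tsum_le _
    _ ≤ 16 * C * integralMean 1 (fun z => G z ^ 2) := by
        gcongr
        refine tsum_sq_cauchyPowerSeries_le (hG.continuousOn.mono ?_)
        rw [closure_ball 0 one_ne_zero]
        exact sphere_subset_closedBall

/-- `‖f‖` is dominated on the closed unit disc by `‖G‖ ^ 2` for some `G` in the disc algebra, with
equality on the unit circle. For `f` in the disc algebra such a `G` is a square root of the
quotient of `f` by its Blaschke product. -/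
def HasSqrtMajorant (f : ℂ → ℂ) : Prop :=
  ∃ G : ℂ → ℂ, DiffContOnCl ℂ G (ball 0 1) ∧
    (∀ z ∈ closedBall (0 : ℂ) 1, ‖f z‖ ≤ ‖G z‖ ^ 2) ∧
    ∀ z ∈ sphere (0 : ℂ) 1, ‖f z‖ = ‖G z‖ ^ 2

namespace HasSqrtMajorant

variable {f g : ℂ → ℂ}

theorem mul (hf : HasSqrtMajorant f) (hg : HasSqrtMajorant g) :
    HasSqrtMajorant fun z => f z * g z := by
  obtain ⟨F, hF, hfF, hfF_eq⟩ := hf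
  obtain ⟨G, hG, hgG, hgG_eq⟩ := hg
  refine ⟨fun z => F z * G z, hF.smul hG, fun z hz => ?_, fun z hz => ?_⟩
  · rw [norm_mul, norm_mul, mul_pow]
    gcongr
    exacts [hfF z hz, hgG z hz]
  · rw [norm_mul, norm_mul, mul_pow, hfF_eq z hz, hgG_eq z hz]

theorem mono (hf : HasSqrtMajorant f) (hle : ∀ z ∈ closedBall (0 : ℂ) 1, ‖g z‖ ≤ ‖f z‖)
    (heq : ∀ z ∈ sphere (0 : ℂ) 1, ‖g z‖ = ‖f z‖) : HasSqrtMajorant g := by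
  obtain ⟨F, hF, hfF, hfF_eq⟩ := hf
  exact ⟨F, hF, fun z hz => (hle z hz).trans (hfF z hz),
    fun z hz => (heq z hz).trans (hfF_eq z hz)⟩

theorem const (c : ℂ) : HasSqrtMajorant fun _ => c := by
  have hsq : ‖c‖ = ‖(√‖c‖ : ℂ)‖ ^ 2 := by
    rw [Complex.norm_of_nonneg (Real.sqrt_nonneg _), Real.sq_sqrt (norm_nonneg c)]
  exact ⟨fun _ => √‖c‖, diffContOnCl_const, fun _ _ => hsq.le, fun _ _ => hsq⟩

theorem one_sub_mul {b : ℂ} (hb : ‖b‖ ≤ 1) : HasSqrtMajorant fun z => 1 - b * z := by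
  have hre (z : ℂ) : 1 - ‖z‖ ≤ (1 - b * z).re := by
    rw [Complex.sub_re, Complex.one_re]
    have hle : ‖b * z‖ ≤ ‖z‖ := by
      rw [norm_mul]
      exact mul_le_of_le_one_left (norm_nonneg z) hb
    linarith [Complex.re_le_norm (b * z)]
  have hsq (z : ℂ) : ‖1 - b * z‖ = ‖(1 - b * z) ^ ((2 : ℕ) : ℂ)⁻¹‖ ^ 2 := by
    rw [← norm_pow, Complex.cpow_nat_inv_pow _ two_ne_zero]
  refine ⟨fun z => (1 - b * z) ^ ((2 : ℕ) : ℂ)⁻¹, ⟨fun z hz => ?_, ?_⟩,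
    fun z _ => (hsq z).le, fun z _ => hsq z⟩
  · have hslit : 1 - b * z ∈ Complex.slitPlane :=
      Or.inl (by linarith [hre z, mem_ball_zero_iff.1 hz])
    have hdiff : DifferentiableAt ℂ (fun w => 1 - b * w) z := by fun_prop
    exact (hdiff.cpow_const hslit).differentiableWithinAt
  · rw [closure_ball _ one_ne_zero]
    intro z hz
    have hcpow : ContinuousAt (fun w : ℂ => w ^ ((2 : ℕ) : ℂ)⁻¹) (1 - b * z) :=
      Complex.continuousAt_cpow_const_of_re_pos
        (Or.inl (by linarith [hre z, mem_closedBall_zero_iff.1 hz])) (by norm_num)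
    exact (hcpow.comp (f := fun z => 1 - b * z) (by fun_prop)).continuousWithinAt

-- If `‖a‖ ≤ 1`, the Blaschke factor `(z - a) / (1 - conj a * z)` has modulus at most `1`.
theorem sub_const (a : ℂ) : HasSqrtMajorant fun z => z - a := by
  rcases le_or_gt ‖a‖ 1 with ha | ha
  · have hnorm_sq (z : ℂ) : ‖1 - starRingEnd ℂ a * z‖ ^ 2 - ‖z - a‖ ^ 2 =
        (1 - ‖a‖ ^ 2) * (1 - ‖z‖ ^ 2) := by
      simp only [← Complex.normSq_eq_norm_sq, Complex.normSq_apply, Complex.sub_re, Complex.sub_im,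
        Complex.mul_re, Complex.mul_im, Complex.conj_re, Complex.conj_im, Complex.one_re,
        Complex.one_im]
      ring
    refine (one_sub_mul (b := starRingEnd ℂ a) (by rwa [Complex.norm_conj])).mono
      (fun z hz => ?_) fun z hz => ?_
    · have hfactor : 0 ≤ (1 - ‖a‖ ^ 2) * (1 - ‖z‖ ^ 2) :=
        mul_nonneg (sub_nonneg.2 (pow_le_one₀ (norm_nonneg a) ha))
          (sub_nonneg.2 (pow_le_one₀ (norm_nonneg z) (mem_closedBall_zero_iff.1 hz)))
      exact (sq_le_sq₀ (norm_nonneg _) (norm_nonneg _)).1 (by linarith [hnorm_sq z])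
    · have hzero := hnorm_sq z
      rw [mem_sphere_zero_iff_norm.1 hz, one_pow, sub_self, mul_zero] at hzero
      exact (sq_eq_sq₀ (norm_nonneg _) (norm_nonneg _)).1 (by linarith)
  · have ha₀ : a ≠ 0 := norm_pos_iff.1 (one_pos.trans ha)
    have hinv : ‖a⁻¹‖ ≤ 1 := by
      rw [norm_inv]
      exact inv_le_one_of_one_le₀ ha.le
    convert (const (-a)).mul (one_sub_mul hinv) using 2 with z
    field_simp
    ring

theorem polynomial (p : Polynomial ℂ) : HasSqrtMajorant fun z => p.eval z := by
  have hroots (s : Multiset ℂ) : HasSqrtMajorant fun z =>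
      ((s.map fun a => Polynomial.X - Polynomial.C a).prod).eval z := by
    induction s using Multiset.induction with
    | empty => simpa only [Multiset.map_zero, Multiset.prod_zero, Polynomial.eval_one] using const 1
    | cons a s ih =>
      simp only [Multiset.map_cons, Multiset.prod_cons, Polynomial.eval_mul, Polynomial.eval_sub,
        Polynomial.eval_X, Polynomial.eval_C]
      exact (sub_const a).mul ih
  rw [(IsAlgClosed.splits p).eq_prod_roots]
  simp only [Polynomial.eval_mul, Polynomial.eval_C]
  exact (const _).mul (hroots _)

end HasSqrtMajorant

theorem IsRadialCarleson.lintegral_norm_le_of_hasSqrtMajorant {C : ℝ≥0} {ν : Measure ℝ}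
    (hν : IsRadialCarleson C ν) {f : ℂ → ℂ} (hf : HasSqrtMajorant f) :
    ∫⁻ t in Ico (0 : ℝ) 1, ‖f t‖ₑ ∂ν ≤ 16 * C * integralMean 1 f := by
  obtain ⟨G, hG, hfG, hfG_eq⟩ := hf
  have hmean : integralMean 1 (fun z => G z ^ 2) = integralMean 1 f := by
    simp only [integralMean]
    congr 2 with θ
    rw [← ofReal_norm, ← ofReal_norm, norm_pow,
      ← hfG_eq _ (circleMap_mem_sphere 0 zero_le_one θ)]
  refine le_trans (setLIntegral_mono' measurableSet_Ico fun t ht => ?_)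
    ((hν.lintegral_sq_le hG).trans_eq (by rw [hmean]))
  have ht_ball : (t : ℂ) ∈ closedBall (0 : ℂ) 1 := by
    rw [mem_closedBall_zero_iff, Complex.norm_of_nonneg ht.1]
    exact ht.2.le
  rw [← ofReal_norm, ← ofReal_norm, ← ENNReal.ofReal_pow (norm_nonneg _)]
  exact ENNReal.ofReal_le_ofReal (hfG t ht_ball)

theorem exists_polynomial_norm_sub_le {f : ℂ → ℂ} (hf : DifferentiableOn ℂ f (ball 0 1)) {r : ℝ}
    (hr : r ∈ Ico (0 : ℝ) 1) {ε : ℝ} (hε : 0 < ε) :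
    ∃ p : Polynomial ℂ, ∀ z ∈ closedBall (0 : ℂ) 1, ‖f (r * z) - p.eval z‖ ≤ ε := by
  obtain ⟨s, hrs, hs⟩ := exists_between hr.2
  obtain ⟨R, hsR, hR⟩ := exists_between hs
  have hs₀ : 0 ≤ s := hr.1.trans hrs.le
  lift s to ℝ≥0 using hs₀
  lift R to ℝ≥0 using s.2.trans hsR.le
  have hseries := (hf.mono (closedBall_subset_ball hR)).hasFPowerSeriesOnBall
    (by exact_mod_cast s.2.trans_lt hsR)
  obtain ⟨n, hn⟩ := (Metric.tendstoUniformlyOn_iff.1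
    (hseries.tendstoUniformlyOn (r' := s) (by exact_mod_cast hsR)) ε hε).exists
  set q := cauchyPowerSeries f 0 R
  refine ⟨(∑ k ∈ Finset.range n, Polynomial.C (q.coeff k) * Polynomial.X ^ k).comp
    (Polynomial.C (r : ℂ) * Polynomial.X), fun z hz => ?_⟩
  have hrz : (r : ℂ) * z ∈ ball (0 : ℂ) s := by
    rw [mem_ball_zero_iff, norm_mul, Complex.norm_of_nonneg hr.1]
    exact (mul_le_of_le_one_right hr.1 (mem_closedBall_zero_iff.1 hz)).trans_lt hrs
  have hdist := hn _ hrz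
  rw [dist_eq_norm, zero_add] at hdist
  refine le_of_eq_of_le ?_ hdist.le
  congr 2
  simp only [Polynomial.eval_comp, Polynomial.eval_mul, Polynomial.eval_C, Polynomial.eval_X,
    Polynomial.eval_finsetSum, Polynomial.eval_pow, FormalMultilinearSeries.partialSum,
    FormalMultilinearSeries.apply_eq_pow_smul_coeff, smul_eq_mul, mul_comm]

theorem exists_seq_polynomial_tendsto {f : ℂ → ℂ} (hf : DifferentiableOn ℂ f (ball 0 1)) :
    ∃ (r ε : ℕ → ℝ) (p : ℕ → Polynomial ℂ), (∀ n, r n ∈ Ico (0 : ℝ) 1) ∧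
      Tendsto ε atTop (nhds 0) ∧
      (∀ n, ∀ z ∈ closedBall (0 : ℂ) 1, ‖f (r n * z) - (p n).eval z‖ ≤ ε n) ∧
      ∀ z ∈ ball (0 : ℂ) 1, Tendsto (fun n => (p n).eval z) atTop (nhds (f z)) := by
  set ε : ℕ → ℝ := fun n => 1 / ((n : ℝ) + 1)
  have hε_tendsto : Tendsto ε atTop (nhds 0) := tendsto_one_div_add_atTop_nhds_zero_nat
  have hε_pos (n : ℕ) : 0 < ε n := Nat.one_div_pos_of_nat
  have hr (n : ℕ) : 1 - ε n ∈ Ico (0 : ℝ) 1 := by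
    refine ⟨sub_nonneg.2 (div_le_one_of_le₀ ?_ (by positivity)), sub_lt_self 1 (hε_pos n)⟩
    exact le_add_of_nonneg_left n.cast_nonneg
  choose p hp using fun n => exists_polynomial_norm_sub_le hf (hr n) (hε_pos n)
  refine ⟨fun n => 1 - ε n, ε, p, hr, hε_tendsto, hp, fun z hz => ?_⟩
  have hdilate : Tendsto (fun n => ((1 - ε n : ℝ) : ℂ) * z) atTop (nhds z) := by
    simpa using ((Complex.continuous_ofReal.tendsto _).comp
      (hε_tendsto.const_sub 1)).mul_const z
  have hf_tendsto : Tendsto (fun n => f ((1 - ε n : ℝ) * z)) atTop (nhds (f z)) :=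
    (hf.continuousOn.continuousAt (isOpen_ball.mem_nhds hz)).tendsto.comp hdilate
  have hdiff : Tendsto (fun n => f ((1 - ε n : ℝ) * z) - (p n).eval z) atTop (nhds 0) :=
    squeeze_zero_norm (fun n => hp n z (ball_subset_closedBall hz)) hε_tendsto
  simpa only [sub_sub_cancel, sub_zero] using hf_tendsto.sub hdiff

theorem IsRadialCarleson.lintegral_polynomial_le {C : ℝ≥0} {ν : Measure ℝ}
    (hν : IsRadialCarleson C ν) {f : ℂ → ℂ} {r ε : ℝ} (hr : r ∈ Ico (0 : ℝ) 1) {p : Polynomial ℂ}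
    (hp : ∀ z ∈ closedBall (0 : ℂ) 1, ‖f (r * z) - p.eval z‖ ≤ ε) :
    ∫⁻ t in Ico (0 : ℝ) 1, ‖p.eval (t : ℂ)‖ₑ ∂ν ≤ 16 * C * (hardyNorm f + ENNReal.ofReal ε) := by
  have hdilate : integralMean 1 (fun z => f (r * z)) = integralMean r f := by
    simp only [integralMean, circleMap_zero, Complex.ofReal_one, one_mul]
  have hmean : integralMean 1 (fun z => p.eval z) ≤ hardyNorm f + ENNReal.ofReal ε := by
    refine (integralMean_le_add (g := fun z => f (r * z)) fun z hz => ?_).trans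
      (add_le_add_left (hdilate.trans_le (integralMean_le_hardyNorm f hr)) _)
    rw [abs_one] at hz
    have hclose : ‖p.eval z - f (r * z)‖ₑ ≤ ENNReal.ofReal ε := by
      rw [← ofReal_norm, norm_sub_rev]
      exact ENNReal.ofReal_le_ofReal (hp z (sphere_subset_closedBall hz))
    calc ‖p.eval z‖ₑ = ‖f (r * z) + (p.eval z - f (r * z))‖ₑ := by rw [add_sub_cancel]
      _ ≤ ‖f (r * z)‖ₑ + ‖p.eval z - f (r * z)‖ₑ := enorm_add_le _ _
      _ ≤ ‖f (r * z)‖ₑ + ENNReal.ofReal ε := by gcongr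
  exact (hν.lintegral_norm_le_of_hasSqrtMajorant (.polynomial p)).trans (by gcongr)

theorem IsRadialCarleson.lintegral_norm_le_hardyNorm {C : ℝ≥0} {ν : Measure ℝ}
    (hν : IsRadialCarleson C ν) {f : ℂ → ℂ} (hf : DifferentiableOn ℂ f (ball 0 1)) :
    ∫⁻ t in Ico (0 : ℝ) 1, ‖f t‖ₑ ∂ν ≤ 16 * C * hardyNorm f := by
  obtain ⟨r, ε, p, hr, hε, hp, hp_tendsto⟩ := exists_seq_polynomial_tendsto hf
  have hbound_tendsto : Tendsto (fun n => 16 * (C : ℝ≥0∞) * (hardyNorm f + ENNReal.ofReal (ε n)))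
      atTop (nhds (16 * C * hardyNorm f)) := by
    refine ENNReal.Tendsto.const_mul ?_
      (Or.inr (ENNReal.mul_ne_top (by norm_num) ENNReal.coe_ne_top))
    simpa only [ENNReal.ofReal_zero, add_zero] using
      (ENNReal.tendsto_ofReal hε).const_add (hardyNorm f)
  have hliminf (t : ℝ) (ht : t ∈ Ico (0 : ℝ) 1) :
      ‖f t‖ₑ = liminf (fun n => ‖(p n).eval (t : ℂ)‖ₑ) atTop := by
    have ht_ball : (t : ℂ) ∈ ball (0 : ℂ) 1 := by
      rw [mem_ball_zero_iff, Complex.norm_of_nonneg ht.1]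
      exact ht.2
    exact (hp_tendsto t ht_ball).enorm.liminf_eq.symm
  calc ∫⁻ t in Ico (0 : ℝ) 1, ‖f t‖ₑ ∂ν
      = ∫⁻ t in Ico (0 : ℝ) 1, liminf (fun n => ‖(p n).eval (t : ℂ)‖ₑ) atTop ∂ν :=
        setLIntegral_congr_fun measurableSet_Ico hliminf
    _ ≤ liminf (fun n => ∫⁻ t in Ico (0 : ℝ) 1, ‖(p n).eval (t : ℂ)‖ₑ ∂ν) atTop :=
        lintegral_liminf_le fun n =>
          ((p n).continuous.comp Complex.continuous_ofReal).enorm.measurable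
    _ ≤ liminf (fun n => 16 * (C : ℝ≥0∞) * (hardyNorm f + ENNReal.ofReal (ε n))) atTop :=
        liminf_le_liminf (Eventually.of_forall fun n => hν.lintegral_polynomial_le (hr n) (hp n))
    _ = 16 * C * hardyNorm f := hbound_tendsto.liminf_eq

/-- The radial weight `(log (2 / (1 - r))) ^ β`, which at `r = |z|` is the weight of the space
`𝒟¹(log^β)`. -/
noncomputable def logWeight (β r : ℝ) : ℝ := Real.log (2 / (1 - r)) ^ β

section LogWeight

variable {β r t : ℝ}

theorem log_two_le_log_two_div_one_sub (ht : t ∈ Ico (0 : ℝ) 1) :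
    Real.log 2 ≤ Real.log (2 / (1 - t)) := by
  refine Real.log_le_log two_pos ?_
  rw [le_div_iff₀ (sub_pos.2 ht.2)]
  linarith [ht.1]

theorem log_two_div_one_sub_pos (ht : t ∈ Ico (0 : ℝ) 1) : 0 < Real.log (2 / (1 - t)) :=
  (Real.log_pos one_lt_two).trans_le (log_two_le_log_two_div_one_sub ht)

theorem logWeight_pos (β : ℝ) (ht : t ∈ Ico (0 : ℝ) 1) : 0 < logWeight β t :=
  Real.rpow_pos_of_pos (log_two_div_one_sub_pos ht) β

@[fun_prop]
theorem measurable_logWeight (β : ℝ) : Measurable (logWeight β) := by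
  unfold logWeight
  fun_prop

theorem log_two_div_one_sub_le (hr : r < 1) (htr : t ≤ r) :
    Real.log (2 / (1 - t)) ≤ Real.log (2 / (1 - r)) := by
  have ht₀ : 0 < 1 - t := by linarith
  refine Real.log_le_log (by positivity) ?_
  gcongr

theorem logWeight_monotoneOn (hβ : 0 ≤ β) : MonotoneOn (logWeight β) (Ico 0 1) :=
  fun _ ha _ hb hab =>
    Real.rpow_le_rpow (log_two_div_one_sub_pos ha).le (log_two_div_one_sub_le hb.2 hab) hβ

theorem logWeight_antitoneOn (hβ : β ≤ 0) : AntitoneOn (logWeight β) (Ico 0 1) :=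
  fun _ ha _ hb hab =>
    Real.rpow_le_rpow_of_nonpos (log_two_div_one_sub_pos ha) (log_two_div_one_sub_le hb.2 hab) hβ

theorem logWeight_sub_one_le (β : ℝ) (ht : t ∈ Ico (0 : ℝ) 1) :
    logWeight (β - 1) t ≤ (Real.log 2)⁻¹ * logWeight β t := by
  rw [logWeight, Real.rpow_sub_one (log_two_div_one_sub_pos ht).ne', div_eq_inv_mul]
  refine mul_le_mul_of_nonneg_right ?_ (logWeight_pos β ht).le
  exact inv_anti₀ (Real.log_pos one_lt_two) (log_two_le_log_two_div_one_sub ht)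

theorem hasDerivAt_logWeight (β : ℝ) (ht : t ∈ Ico (0 : ℝ) 1) :
    HasDerivAt (logWeight β) (β * logWeight (β - 1) t * (1 - t)⁻¹) t := by
  have ht₀ : 1 - t ≠ 0 := (sub_pos.2 ht.2).ne'
  have hdiv : HasDerivAt (fun r => 2 / (1 - r)) (2 / (1 - t) ^ 2) t := by
    refine (((hasDerivAt_id' t).const_sub 1).fun_inv ht₀ |>.const_mul 2).congr_deriv ?_
    ring
  have hlog : HasDerivAt (fun r => Real.log (2 / (1 - r))) (1 - t)⁻¹ t := by
    refine (hdiv.log (div_ne_zero two_ne_zero ht₀)).congr_deriv ?_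
    field_simp
  refine (hlog.rpow_const (p := β) (Or.inl (log_two_div_one_sub_pos ht).ne')).congr_deriv ?_
  rw [logWeight]
  ring

theorem log_two_div_one_sub_le_mul_rpow {ε : ℝ} (hε : 0 < ε) (ht : t ∈ Ico (0 : ℝ) 1)
    (hr : r ∈ Ico t 1) :
    Real.log (2 / (1 - r)) ≤
      Real.log (2 / (1 - t)) * ((1 + (ε * Real.log 2)⁻¹) * ((1 - t) / (1 - r)) ^ ε) := by
  have ht₀ : 0 < 1 - t := sub_pos.2 ht.2
  have hr₀ : 0 < 1 - r := sub_pos.2 hr.2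
  set x := (1 - t) / (1 - r) with hx
  have hx_one : 1 ≤ x := by
    rw [hx, one_le_div hr₀]
    linarith [hr.1]
  have hsplit : Real.log (2 / (1 - r)) = Real.log (2 / (1 - t)) + Real.log x := by
    rw [← Real.log_mul (by positivity) (by positivity), hx]
    congr 1
    field_simp
  have hlogx : Real.log x ≤ Real.log (2 / (1 - t)) * ((ε * Real.log 2)⁻¹ * x ^ ε) := by
    calc Real.log x ≤ x ^ ε / ε := Real.log_le_rpow_div (by positivity) hε
      _ = Real.log 2 * ((ε * Real.log 2)⁻¹ * x ^ ε) := by field_simp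
      _ ≤ Real.log (2 / (1 - t)) * ((ε * Real.log 2)⁻¹ * x ^ ε) := by
        exact mul_le_mul_of_nonneg_right (log_two_le_log_two_div_one_sub ht) (by positivity)
  have hone : Real.log (2 / (1 - t)) ≤ Real.log (2 / (1 - t)) * x ^ ε :=
    le_mul_of_one_le_right (log_two_div_one_sub_pos ht).le (Real.one_le_rpow hx_one hε.le)
  rw [hsplit]
  linarith

-- The Potter bound for the slowly varying function `logWeight β`.
theorem exists_logWeight_le_mul_rpow (β : ℝ) {δ : ℝ} (hδ : 0 < δ) :
    ∃ K > 0, ∀ t ∈ Ico (0 : ℝ) 1, ∀ r ∈ Ico t 1,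
      logWeight β r ≤ K * logWeight β t * ((1 - t) / (1 - r)) ^ δ := by
  rcases le_or_gt β 0 with hβ | hβ
  · refine ⟨1, one_pos, fun t ht r hr => ?_⟩
    have hr₀ : 0 < 1 - r := sub_pos.2 hr.2
    have hone : 1 ≤ ((1 - t) / (1 - r)) ^ δ := by
      refine Real.one_le_rpow ?_ hδ.le
      rw [one_le_div hr₀]
      linarith [hr.1]
    rw [one_mul]
    exact (logWeight_antitoneOn hβ ht ⟨ht.1.trans hr.1, hr.2⟩ hr.1).trans
      (le_mul_of_one_le_right (logWeight_pos β ht).le hone)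
  · set A : ℝ := 1 + (δ / β * Real.log 2)⁻¹
    have hA : 0 < A := by positivity
    refine ⟨A ^ β, by positivity, fun t ht r hr => ?_⟩
    have hr' : r ∈ Ico (0 : ℝ) 1 := ⟨ht.1.trans hr.1, hr.2⟩
    have hx : 0 ≤ (1 - t) / (1 - r) := (div_pos (sub_pos.2 ht.2) (sub_pos.2 hr.2)).le
    have hxpow : 0 ≤ ((1 - t) / (1 - r)) ^ (δ / β) := Real.rpow_nonneg hx _
    calc logWeight β r
        ≤ (Real.log (2 / (1 - t)) * (A * ((1 - t) / (1 - r)) ^ (δ / β))) ^ β :=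
          Real.rpow_le_rpow (log_two_div_one_sub_pos hr').le
            (log_two_div_one_sub_le_mul_rpow (by positivity) ht hr) hβ.le
      _ = A ^ β * logWeight β t * ((1 - t) / (1 - r)) ^ δ := by
          rw [Real.mul_rpow (log_two_div_one_sub_pos ht).le (by positivity),
            Real.mul_rpow hA.le hxpow, ← Real.rpow_mul hx, div_mul_cancel₀ _ hβ.ne', logWeight]
          ring

theorem setLIntegral_one_sub_rpow {s : ℝ} (hs : -1 < s) (ht : t ≤ 1) :
    ∫⁻ r in Ico t 1, ENNReal.ofReal ((1 - r) ^ s) =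
      ENNReal.ofReal ((1 - t) ^ (s + 1) / (s + 1)) := by
  have hint : IntervalIntegrable (fun r => (1 - r) ^ s) volume t 1 := by
    simpa using ((intervalIntegral.intervalIntegrable_rpow' (a := 0) (b := 1 - t) hs).comp_sub_left
      1).symm
  rw [← ofReal_integral_eq_lintegral_ofReal
      ((intervalIntegrable_iff_integrableOn_Ico_of_le ht).1 hint)
      ((ae_restrict_mem measurableSet_Ico).mono fun r hr => Real.rpow_nonneg (sub_pos.2 hr.2).le s),
    integral_Ico_eq_integral_Ioc, ← intervalIntegral.integral_of_le ht,
    intervalIntegral.integral_comp_sub_left (fun x => x ^ s), sub_self, integral_rpow (Or.inl hs),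
    Real.zero_rpow (by linarith), sub_zero]

theorem exists_setLIntegral_logWeight_le (β : ℝ) :
    ∃ K > 0, ∀ t ∈ Ico (0 : ℝ) 1, ∀ (c : ℝ≥0∞) (μ : Measure ℝ),
      (∀ s ∈ Ico t 1, μ (Ico s 1) ≤ c * ENNReal.ofReal (1 - s)) →
      ∫⁻ r in Ico t 1, ENNReal.ofReal (logWeight β r) ∂μ ≤
        c * ENNReal.ofReal (K * logWeight β t * (1 - t)) := by
  obtain ⟨K, hK, hpotter⟩ := exists_logWeight_le_mul_rpow β one_half_pos
  refine ⟨2 * K, by positivity, fun t ht c μ hμ => ?_⟩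
  have ht₀ : 0 < 1 - t := sub_pos.2 ht.2
  have hLt := logWeight_pos β ht
  set g : ℝ → ℝ := fun r => K * logWeight β t * (1 - t) ^ (1 / 2 : ℝ) * (1 - r) ^ (-(1 / 2) : ℝ)
  have hg_mono : MonotoneOn g (Ico t 1) := fun a _ b hb hab => by
    have hb₀ : 0 < 1 - b := sub_pos.2 hb.2
    refine mul_le_mul_of_nonneg_left ?_ (by positivity)
    exact Real.rpow_le_rpow_of_nonpos hb₀ (by linarith) (by norm_num)
  calc ∫⁻ r in Ico t 1, ENNReal.ofReal (logWeight β r) ∂μ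
      ≤ ∫⁻ r in Ico t 1, ENNReal.ofReal (g r) ∂μ := by
        refine setLIntegral_mono' measurableSet_Ico fun r hr => ENNReal.ofReal_le_ofReal ?_
        have hr₀ : 0 < 1 - r := sub_pos.2 hr.2
        refine (hpotter t ht r hr).trans_eq ?_
        simp only [g]
        rw [Real.div_rpow ht₀.le hr₀.le, Real.rpow_neg hr₀.le, div_eq_mul_inv, ← mul_assoc]
    _ ≤ ∫⁻ r in Ico t 1, ENNReal.ofReal (g r) ∂(c • volume) := by
        refine setLIntegral_le_of_measure_Ico_le hg_mono (fun r hr => ?_) fun s hs => ?_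
        · have hr₀ : 0 < 1 - r := sub_pos.2 hr.2
          positivity
        · simpa only [Measure.smul_apply, Real.volume_Ico, smul_eq_mul] using hμ s hs
    _ = c * ENNReal.ofReal (2 * K * logWeight β t * (1 - t)) := by
        have hhalf : (1 - t) ^ (1 / 2 : ℝ) * (1 - t) ^ (1 / 2 : ℝ) = 1 - t := by
          rw [← Real.rpow_add ht₀, add_halves, Real.rpow_one]
        simp only [g, ENNReal.ofReal_mul (p := K * logWeight β t * (1 - t) ^ (1 / 2 : ℝ))
          (by positivity)]
        rw [Measure.restrict_smul, lintegral_smul_measure,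
          lintegral_const_mul _ (by fun_prop),
          setLIntegral_one_sub_rpow (by norm_num) ht.2.le, ← ENNReal.ofReal_mul (by positivity),
          smul_eq_mul]
        congr 2
        norm_num
        linear_combination 2 * K * logWeight β t * hhalf

end LogWeight

theorem exists_isRadialCarleson_withDensity_logWeight {α C : ℝ} (hα : 0 ≤ α) (hC : 0 < C)
    {μ : Measure ℝ} [IsFiniteMeasure μ]
    (hμ : ∀ t ∈ Ico (0 : ℝ) 1, (μ (Ico t 1)).toReal * logWeight α t ≤ C * (1 - t)) :
    ∃ C' > 0, IsRadialCarleson C' (μ.withDensity fun t => ENNReal.ofReal (logWeight α t)) := by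
  obtain ⟨K, hK, hint⟩ := exists_setLIntegral_logWeight_le α
  refine ⟨(C * K).toNNReal, Real.toNNReal_pos.2 (by positivity), fun t ht => ?_⟩
  have hLt := logWeight_pos α ht
  have hmass (s : ℝ) (hs : s ∈ Ico t 1) :
      μ (Ico s 1) ≤ ENNReal.ofReal (C / logWeight α t) * ENNReal.ofReal (1 - s) := by
    have hs₀ : s ∈ Ico (0 : ℝ) 1 := ⟨ht.1.trans hs.1, hs.2⟩
    rw [← ENNReal.ofReal_mul (by positivity), ← ENNReal.ofReal_toReal (measure_ne_top μ (Ico s 1))]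
    refine ENNReal.ofReal_le_ofReal ?_
    rw [div_mul_eq_mul_div, le_div_iff₀ hLt]
    calc (μ (Ico s 1)).toReal * logWeight α t ≤ (μ (Ico s 1)).toReal * logWeight α s := by
          gcongr
          exact logWeight_monotoneOn hα ht hs₀ hs.1
      _ ≤ C * (1 - s) := hμ s hs₀
  rw [withDensity_apply _ measurableSet_Ico]
  refine (hint t ht _ μ hmass).trans_eq ?_
  rw [← ENNReal.ofReal, ← ENNReal.ofReal_mul (by positivity), ← ENNReal.ofReal_mul (by positivity)]
  congr 1
  field_simp

section DiscKernel

theorem one_sub_norm_le_norm_one_sub_mul (z : ℂ) {w : ℂ} (hw : ‖w‖ ≤ 1) :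
    1 - ‖z‖ ≤ ‖1 - w * z‖ := by
  have hsub := norm_sub_norm_le 1 (w * z)
  rw [norm_one, norm_mul] at hsub
  linarith [mul_le_of_le_one_left (norm_nonneg z) hw]

theorem circleAverage_poissonKernel {w : ℂ} (hw : w ∈ ball (0 : ℂ) 1) :
    Real.circleAverage (poissonKernel 0 w) 0 1 = 1 := by
  have hpoisson := InnerProductSpace.HarmonicOnNhd.circleAverage_poissonKernel_smul
    (fun z _ => InnerProductSpace.harmonicAt_const (1 : ℝ)) hw
  rwa [show poissonKernel 0 w • (fun _ => (1 : ℝ)) = poissonKernel 0 w from mul_one _] at hpoisson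

theorem norm_one_sub_mul_circleMap (w : ℂ) (θ : ℝ) :
    ‖1 - w * circleMap 0 1 θ‖ = ‖circleMap 0 1 θ - (starRingEnd ℂ) w‖ := by
  have hnorm : ‖circleMap 0 1 θ‖ = 1 := by simp
  have hmul : circleMap 0 1 θ * (starRingEnd ℂ) (circleMap 0 1 θ) = 1 := by
    rw [Complex.mul_conj', hnorm]
    norm_num
  have hconj : (starRingEnd ℂ) (circleMap 0 1 θ - (starRingEnd ℂ) w) * circleMap 0 1 θ =
      1 - w * circleMap 0 1 θ := by
    rw [map_sub, Complex.conj_conj]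
    linear_combination hmul
  rw [← hconj, norm_mul, hnorm, mul_one, RCLike.norm_conj]

theorem integral_inv_norm_one_sub_sq {w : ℂ} (hw : ‖w‖ < 1) :
    ∫ θ in -Real.pi..Real.pi, (‖1 - w * circleMap 0 1 θ‖ ^ 2)⁻¹ =
      2 * Real.pi / (1 - ‖w‖ ^ 2) := by
  have hw₂ : 0 < 1 - ‖w‖ ^ 2 := by nlinarith [norm_nonneg w]
  have hkernel (θ : ℝ) : poissonKernel 0 ((starRingEnd ℂ) w) (circleMap 0 1 θ) =
      (1 - ‖w‖ ^ 2) * (‖1 - w * circleMap 0 1 θ‖ ^ 2)⁻¹ := by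
    rw [poissonKernel_def, norm_one_sub_mul_circleMap]
    simp [div_eq_mul_inv]
  have havg := circleAverage_poissonKernel (w := (starRingEnd ℂ) w) (by simpa using hw)
  rw [Real.circleAverage_eq_integral_add (-Real.pi),
    intervalIntegral.integral_comp_add_right
      (fun θ => poissonKernel 0 ((starRingEnd ℂ) w) (circleMap 0 1 θ)),
    show 0 + -Real.pi = -Real.pi by ring, show 2 * Real.pi + -Real.pi = Real.pi by ring] at havg
  simp only [hkernel, intervalIntegral.integral_const_mul, smul_eq_mul] at havg
  rw [eq_div_iff hw₂.ne']
  rw [inv_mul_eq_one₀ Real.two_pi_pos.ne'] at havg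
  rw [havg, mul_comm]

theorem lintegral_inv_norm_one_sub_sq {w : ℂ} (hw : ‖w‖ < 1) :
    ∫⁻ θ in Ioo (-Real.pi) Real.pi, ENNReal.ofReal (‖1 - w * circleMap 0 1 θ‖ ^ 2)⁻¹ =
      ENNReal.ofReal (2 * Real.pi / (1 - ‖w‖ ^ 2)) := by
  have hne (θ : ℝ) : ‖1 - w * circleMap 0 1 θ‖ ^ 2 ≠ 0 := by
    have hle := one_sub_norm_le_norm_one_sub_mul w (w := circleMap 0 1 θ) (by simp)
    rw [mul_comm] at hle
    have : 0 < ‖1 - w * circleMap 0 1 θ‖ := by linarith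
    positivity
  have hcont : Continuous fun θ => (‖1 - w * circleMap 0 1 θ‖ ^ 2)⁻¹ :=
    Continuous.inv₀ (by fun_prop) hne
  rw [← integral_inv_norm_one_sub_sq hw,
    intervalIntegral.integral_of_le (neg_le_self Real.pi_pos.le),
    ofReal_integral_eq_lintegral_ofReal hcont.integrableOn_Ioc
      (ae_of_all _ fun θ => inv_nonneg.2 (sq_nonneg _)),
    setLIntegral_congr Ioo_ae_eq_Ioc]

theorem setLIntegral_ball_eq_lintegral_circleMap {g : ℂ → ℝ≥0∞} (hg : Measurable g) (R : ℝ) :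
    ∫⁻ z in ball 0 R, g z =
      ∫⁻ r in Ioo 0 R, ENNReal.ofReal r * ∫⁻ θ in Ioo (-Real.pi) Real.pi, g (circleMap 0 r θ) := by
  have hpolar (p : ℝ × ℝ) : Complex.polarCoord.symm p = circleMap 0 p.1 p.2 := by
    rw [Complex.polarCoord_symm_apply, circleMap_zero, Complex.exp_mul_I]
    push_cast
    ring
  have hmeas : Measurable fun p : ℝ × ℝ => (ball (0 : ℂ) R).indicator g (circleMap 0 p.1 p.2) := by
    refine (hg.indicator measurableSet_ball).comp ?_
    unfold circleMap
    fun_prop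
  rw [← lintegral_indicator measurableSet_ball, ← Complex.lintegral_comp_polarCoord_symm,
    polarCoord_target, Measure.volume_eq_prod, ← Measure.prod_restrict]
  simp only [hpolar, smul_eq_mul]
  rw [lintegral_prod _ (by fun_prop), ← Iio_inter_Ioi (b := 0),
    ← setLIntegral_indicator measurableSet_Iio]
  refine setLIntegral_congr_fun measurableSet_Ioi fun r hr => ?_
  dsimp only
  rw [lintegral_const_mul' _ _ ENNReal.ofReal_ne_top]
  by_cases hrR : r < R <;> simp [indicator, hrR, abs_of_pos (mem_Ioi.1 hr)]

theorem setLIntegral_ball_mul_inv_norm_one_sub_sq_le {g : ℝ → ℝ≥0∞} (hg : Measurable g) {w : ℂ}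
    (hw : ‖w‖ ≤ 1) :
    ∫⁻ z in ball (0 : ℂ) 1, g ‖z‖ * ENNReal.ofReal (‖1 - w * z‖ ^ 2)⁻¹ ≤
      ENNReal.ofReal (2 * Real.pi) *
        ∫⁻ r in Ioo 0 1, g r * ENNReal.ofReal (1 - ‖w‖ * r)⁻¹ := by
  rw [setLIntegral_ball_eq_lintegral_circleMap (by fun_prop),
    ← lintegral_const_mul' _ _ ENNReal.ofReal_ne_top]
  refine setLIntegral_mono' measurableSet_Ioo fun r hr => ?_
  have hnorm : ‖w * r‖ = ‖w‖ * r := by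
    rw [norm_mul, Complex.norm_real, Real.norm_of_nonneg hr.1.le]
  have hwr : ‖w‖ * r < 1 := (mul_le_of_le_one_left hr.1.le hw).trans_lt hr.2
  have hwr₀ : 0 ≤ ‖w‖ * r := mul_nonneg (norm_nonneg w) hr.1.le
  have hangle : r * (2 * Real.pi / (1 - ‖w * r‖ ^ 2)) ≤ 2 * Real.pi * (1 - ‖w‖ * r)⁻¹ := by
    rw [hnorm, mul_div_assoc', ← div_eq_mul_inv]
    refine div_le_div₀ Real.two_pi_pos.le ?_ (sub_pos.2 hwr) ?_
    · exact mul_le_of_le_one_left Real.two_pi_pos.le hr.2.le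
    · nlinarith
  have hscale (θ : ℝ) : w * circleMap 0 r θ = w * r * circleMap 0 1 θ := by
    simp only [circleMap_zero, Complex.ofReal_one, one_mul, mul_assoc]
  simp only [hscale, norm_circleMap_zero, abs_of_pos hr.1]
  rw [lintegral_const_mul _ (by fun_prop), lintegral_inv_norm_one_sub_sq (hnorm ▸ hwr),
    mul_left_comm, mul_left_comm _ (g r), ← ENNReal.ofReal_mul hr.1.le,
    ← ENNReal.ofReal_mul (by positivity)]
  gcongr

theorem setLIntegral_Ioc_logWeight_mul_inv_one_sub_le {α t : ℝ} (hα : 0 < α)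
    (ht : t ∈ Ico (0 : ℝ) 1) :
    ∫⁻ r in Ioc 0 t, ENNReal.ofReal (logWeight (α - 1) r * (1 - r)⁻¹) ≤
      ENNReal.ofReal (α⁻¹ * logWeight α t) := by
  have hmem : ∀ r ∈ Icc 0 t, r ∈ Ico (0 : ℝ) 1 := fun r hr => ⟨hr.1, hr.2.trans_lt ht.2⟩
  have hderiv : ∀ r ∈ Icc 0 t, HasDerivAt (fun r => α⁻¹ * logWeight α r)
      (logWeight (α - 1) r * (1 - r)⁻¹) r := fun r hr => by
    refine ((hasDerivAt_logWeight α (hmem r hr)).const_mul α⁻¹).congr_deriv ?_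
    field_simp
  have hnonneg : ∀ r ∈ Icc 0 t, 0 ≤ logWeight (α - 1) r * (1 - r)⁻¹ := fun r hr =>
    mul_nonneg (logWeight_pos _ (hmem r hr)).le (inv_nonneg.2 (sub_nonneg.2 (hmem r hr).2.le))
  have hint : IntegrableOn (fun r => logWeight (α - 1) r * (1 - r)⁻¹) (Ioc 0 t) :=
    intervalIntegral.integrableOn_deriv_of_nonneg
      (fun r hr => (hderiv r hr).continuousAt.continuousWithinAt)
      (fun r hr => hderiv r (Ioo_subset_Icc_self hr)) fun r hr => hnonneg r (Ioo_subset_Icc_self hr)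
  rw [← ofReal_integral_eq_lintegral_ofReal hint ((ae_restrict_mem measurableSet_Ioc).mono
      fun r hr => hnonneg r (Ioc_subset_Icc_self hr)),
    ← intervalIntegral.integral_of_le ht.1,
    intervalIntegral.integral_eq_sub_of_hasDerivAt (by rwa [uIcc_of_le ht.1])
      ((intervalIntegrable_iff_integrableOn_Ioc_of_le ht.1).2 hint)]
  have h₀ := logWeight_pos α ⟨le_rfl, one_pos⟩
  exact ENNReal.ofReal_le_ofReal (sub_le_self _ (by positivity))

theorem exists_setLIntegral_logWeight_mul_inv_one_sub_le {α : ℝ} (hα : 0 < α) :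
    ∃ K > 0, ∀ t ∈ Ico (0 : ℝ) 1,
      ∫⁻ r in Ioo 0 1, ENNReal.ofReal (logWeight (α - 1) r) * ENNReal.ofReal (1 - t * r)⁻¹ ≤
        ENNReal.ofReal (K * logWeight α t) := by
  obtain ⟨K, hK, htail⟩ := exists_setLIntegral_logWeight_le (α - 1)
  refine ⟨α⁻¹ + K * (Real.log 2)⁻¹, by positivity, fun t ht => ?_⟩
  have ht₀ : 0 < 1 - t := sub_pos.2 ht.2
  have hLt := logWeight_pos α ht
  have hnear : ∫⁻ r in Ioc 0 t,
      ENNReal.ofReal (logWeight (α - 1) r) * ENNReal.ofReal (1 - t * r)⁻¹ ≤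
        ENNReal.ofReal (α⁻¹ * logWeight α t) := by
    refine le_trans (setLIntegral_mono' measurableSet_Ioc fun r hr => ?_)
      (setLIntegral_Ioc_logWeight_mul_inv_one_sub_le hα ht)
    have hr₁ : 0 < 1 - r := by linarith [hr.2]
    rw [ENNReal.ofReal_mul (logWeight_pos _ ⟨hr.1.le, sub_pos.1 hr₁⟩).le]
    gcongr
    nlinarith [hr.1]
  have hfar : ∫⁻ r in Ico t 1,
      ENNReal.ofReal (logWeight (α - 1) r) * ENNReal.ofReal (1 - t * r)⁻¹ ≤
        ENNReal.ofReal (K * (Real.log 2)⁻¹ * logWeight α t) := by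
    calc ∫⁻ r in Ico t 1, ENNReal.ofReal (logWeight (α - 1) r) * ENNReal.ofReal (1 - t * r)⁻¹
        ≤ ∫⁻ r in Ico t 1, ENNReal.ofReal (logWeight (α - 1) r) * ENNReal.ofReal (1 - t)⁻¹ := by
          refine setLIntegral_mono' measurableSet_Ico fun r hr => ?_
          gcongr
          exact mul_le_of_le_one_right ht.1 hr.2.le
      _ ≤ ENNReal.ofReal (K * logWeight (α - 1) t * (1 - t)) * ENNReal.ofReal (1 - t)⁻¹ := by
          rw [lintegral_mul_const' _ _ ENNReal.ofReal_ne_top]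
          gcongr
          simpa only [one_mul] using htail t ht 1 volume fun s _ => by simp
      _ ≤ ENNReal.ofReal (K * (Real.log 2)⁻¹ * logWeight α t) := by
          rw [← ENNReal.ofReal_mul' (by positivity), mul_inv_cancel_right₀ ht₀.ne', mul_assoc]
          gcongr
          exact logWeight_sub_one_le α ht
  calc ∫⁻ r in Ioo 0 1, ENNReal.ofReal (logWeight (α - 1) r) * ENNReal.ofReal (1 - t * r)⁻¹
      ≤ ∫⁻ r in Ioc 0 t ∪ Ico t 1,
          ENNReal.ofReal (logWeight (α - 1) r) * ENNReal.ofReal (1 - t * r)⁻¹ :=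
        lintegral_mono_set fun r hr => (le_or_gt r t).imp (⟨hr.1, ·⟩) (⟨·.le, hr.2⟩)
    _ ≤ ENNReal.ofReal (α⁻¹ * logWeight α t) +
          ENNReal.ofReal (K * (Real.log 2)⁻¹ * logWeight α t) :=
        (lintegral_union_le _ _ _).trans (add_le_add hnear hfar)
    _ = ENNReal.ofReal ((α⁻¹ + K * (Real.log 2)⁻¹) * logWeight α t) := by
        rw [← ENNReal.ofReal_add (by positivity) (by positivity), add_mul]

theorem setLIntegral_dA (g : ℂ → ℝ≥0∞) (s : Set ℂ) :
    ∫⁻ z in s, g z ∂dA = (ENNReal.ofReal Real.pi)⁻¹ * ∫⁻ z in s, g z := by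
  rw [dA, Measure.restrict_smul, lintegral_smul_measure, smul_eq_mul]

theorem exists_setLIntegral_ball_logWeight_le {α : ℝ} (hα : 0 < α) :
    ∃ K > 0, ∀ t ∈ Ico (0 : ℝ) 1,
      ∫⁻ z in ball (0 : ℂ) 1,
          ENNReal.ofReal (logWeight (α - 1) ‖z‖) * ENNReal.ofReal (‖1 - t * z‖ ^ 2)⁻¹ ∂dA ≤
        ENNReal.ofReal (K * logWeight α t) := by
  obtain ⟨K, hK, hradial⟩ := exists_setLIntegral_logWeight_mul_inv_one_sub_le hα
  refine ⟨2 * K, by positivity, fun t ht => ?_⟩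
  have hnorm : ‖(t : ℂ)‖ = t := by rw [Complex.norm_real, Real.norm_of_nonneg ht.1]
  have hdisc := setLIntegral_ball_mul_inv_norm_one_sub_sq_le
    (g := fun r => ENNReal.ofReal (logWeight (α - 1) r)) (by fun_prop) (w := t)
    (hnorm.trans_le ht.2.le)
  rw [hnorm] at hdisc
  have hpi : ENNReal.ofReal Real.pi ≠ 0 := (ENNReal.ofReal_pos.2 Real.pi_pos).ne'
  rw [setLIntegral_dA]
  calc _ ≤ (ENNReal.ofReal Real.pi)⁻¹ *
        (ENNReal.ofReal (2 * Real.pi) * ENNReal.ofReal (K * logWeight α t)) := by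
        gcongr
        exact hdisc.trans (by gcongr; exact hradial t ht)
    _ = ENNReal.ofReal (2 * K * logWeight α t) := by
        rw [mul_comm 2, ENNReal.ofReal_mul Real.pi_pos.le, mul_assoc,
          ENNReal.inv_mul_cancel_left hpi ENNReal.ofReal_ne_top, ← ENNReal.ofReal_mul two_pos.le,
          mul_assoc]

end DiscKernel

instance : SFinite dA := by
  unfold dA
  infer_instance

section Operator

variable {μ : Measure ℝ} {f : ℂ → ℂ}

theorem integrable_div_one_sub_mul (hμ : ∀ᵐ t ∂μ, |t| ≤ 1)
    (hf : Integrable (fun t : ℝ => f t) μ) {z : ℂ} (hz : z ∈ ball (0 : ℂ) 1) :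
    Integrable (fun t : ℝ => f t / (1 - t * z)) μ := by
  have hz₀ : 0 < 1 - ‖z‖ := sub_pos.2 (mem_ball_zero_iff.1 hz)
  have hmeas := hf.aestronglyMeasurable.aemeasurable
  refine (hf.norm.div_const (1 - ‖z‖)).mono' (hmeas.div (by fun_prop)).aestronglyMeasurable ?_
  filter_upwards [hμ] with t ht
  rw [norm_div]
  gcongr
  exact one_sub_norm_le_norm_one_sub_mul z (by simpa using ht)

theorem hasDerivAt_Imu (hμ : ∀ᵐ t ∂μ, |t| ≤ 1) (hf : Integrable (fun t : ℝ => f t) μ) {z : ℂ}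
    (hz : z ∈ ball (0 : ℂ) 1) :
    HasDerivAt (Imu μ f) (∫ t : ℝ, f t * t / (1 - t * z) ^ 2 ∂μ) z := by
  obtain ⟨ρ, hzρ, hρ⟩ := exists_between (mem_ball_zero_iff.1 hz)
  have hρ₀ : 0 < 1 - ρ := sub_pos.2 hρ
  have hmeas := hf.aestronglyMeasurable.aemeasurable
  have hlower {t : ℝ} (ht : |t| ≤ 1) {x : ℂ} (hx : x ∈ ball (0 : ℂ) ρ) :
      1 - ρ ≤ ‖1 - t * x‖ :=
    (sub_le_sub_left (mem_ball_zero_iff.1 hx).le 1).trans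
      (one_sub_norm_le_norm_one_sub_mul x (by simpa using ht))
  refine (hasDerivAt_integral_of_dominated_loc_of_deriv_le
    (F := fun z (t : ℝ) => f t / (1 - t * z)) (F' := fun z (t : ℝ) => f t * t / (1 - t * z) ^ 2)
    (bound := fun t : ℝ => ‖f t‖ / (1 - ρ) ^ 2)
    (isOpen_ball.mem_nhds (mem_ball_zero_iff.2 hzρ))
    (Eventually.of_forall fun x => (hmeas.div (by fun_prop)).aestronglyMeasurable)
    (integrable_div_one_sub_mul hμ hf hz)
    ((hmeas.mul (by fun_prop)).div (by fun_prop)).aestronglyMeasurable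
    ?_ (hf.norm.div_const _) ?_).2
  · filter_upwards [hμ] with t ht x hx
    rw [norm_div, norm_mul, norm_pow, Complex.norm_real, Real.norm_eq_abs]
    gcongr
    · exact mul_le_of_le_one_right (norm_nonneg _) ht
    · exact hlower ht hx
  · filter_upwards [hμ] with t ht x hx
    have hne : 1 - (t : ℂ) * x ≠ 0 := norm_pos_iff.1 (hρ₀.trans_le (hlower ht hx))
    have hlin : HasDerivAt (fun x : ℂ => 1 - t * x) (-t) x := by
      simpa using ((hasDerivAt_id x).const_mul (t : ℂ)).const_sub 1
    refine ((hasDerivAt_const x (f t)).fun_div hlin hne).congr_deriv ?_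
    ring

theorem enorm_deriv_Imu_le (hμ : ∀ᵐ t ∂μ, |t| ≤ 1) (hf : Integrable (fun t : ℝ => f t) μ) {z : ℂ}
    (hz : z ∈ ball (0 : ℂ) 1) :
    ‖deriv (Imu μ f) z‖ₑ ≤ ∫⁻ t, ‖f t‖ₑ * ENNReal.ofReal (‖1 - t * z‖ ^ 2)⁻¹ ∂μ := by
  rw [(hasDerivAt_Imu hμ hf hz).deriv]
  refine (enorm_integral_le_lintegral_enorm _).trans (lintegral_mono_ae ?_)
  filter_upwards [hμ] with t ht
  rw [← ofReal_norm, ← ofReal_norm, ← ENNReal.ofReal_mul (norm_nonneg _), norm_div, norm_mul,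
    norm_pow, Complex.norm_real, Real.norm_eq_abs, div_eq_mul_inv]
  gcongr
  exact mul_le_of_le_one_right (norm_nonneg _) ht

theorem lintegral_deriv_Imu_le [SFinite μ] (hμ : ∀ᵐ t ∂μ, |t| ≤ 1)
    (hf : Integrable (fun t : ℝ => f t) μ) {ν : Measure ℂ} [SFinite ν] {g : ℂ → ℝ≥0∞}
    (hg : Measurable g) :
    ∫⁻ z in ball (0 : ℂ) 1, ‖deriv (Imu μ f) z‖ₑ * g z ∂ν ≤
      ∫⁻ t, ‖f t‖ₑ *
        ∫⁻ z in ball (0 : ℂ) 1, g z * ENNReal.ofReal (‖1 - t * z‖ ^ 2)⁻¹ ∂ν ∂μ := by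
  have hmeas := hf.aestronglyMeasurable.aemeasurable
  calc ∫⁻ z in ball (0 : ℂ) 1, ‖deriv (Imu μ f) z‖ₑ * g z ∂ν
      ≤ ∫⁻ z in ball (0 : ℂ) 1,
          ∫⁻ t, ‖f t‖ₑ * (g z * ENNReal.ofReal (‖1 - t * z‖ ^ 2)⁻¹) ∂μ ∂ν := by
        refine setLIntegral_mono' measurableSet_ball fun z hz => ?_
        have hint : AEMeasurable (fun t : ℝ => ‖f t‖ₑ * ENNReal.ofReal (‖1 - t * z‖ ^ 2)⁻¹) μ :=
          hmeas.enorm.mul (Measurable.aemeasurable (by fun_prop))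
        refine (mul_le_mul_left (enorm_deriv_Imu_le hμ hf hz) (g z)).trans_eq ?_
        rw [← lintegral_mul_const'' _ hint]
        exact lintegral_congr fun t => by ring
    _ = ∫⁻ t, ∫⁻ z in ball (0 : ℂ) 1,
          ‖f t‖ₑ * (g z * ENNReal.ofReal (‖1 - t * z‖ ^ 2)⁻¹) ∂ν ∂μ := by
        have hprod : Measurable fun p : ℂ × ℝ =>
            g p.1 * ENNReal.ofReal (‖1 - p.2 * p.1‖ ^ 2)⁻¹ := by fun_prop
        exact lintegral_lintegral_swap (hmeas.comp_snd.enorm.mul hprod.aemeasurable)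
    _ = _ := lintegral_congr fun t => lintegral_const_mul' _ _ enorm_ne_top

theorem lintegral_enorm_mul_logWeight_le {α : ℝ} {C : ℝ≥0} (hμ : ∀ᵐ t ∂μ, t ∈ Ico (0 : ℝ) 1)
    (hC : IsRadialCarleson C (μ.withDensity fun t => ENNReal.ofReal (logWeight α t)))
    (hf : DifferentiableOn ℂ f (ball 0 1)) :
    ∫⁻ t, ‖f t‖ₑ * ENNReal.ofReal (logWeight α t) ∂μ ≤ 16 * C * hardyNorm f := by
  have hembed := hC.lintegral_norm_le_hardyNorm hf
  rw [setLIntegral_withDensity_eq_setLIntegral_mul_non_measurable μ (by fun_prop) _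
      measurableSet_Ico (ae_of_all _ fun _ => ENNReal.ofReal_lt_top),
    Measure.restrict_eq_self_of_ae_mem hμ] at hembed
  simpa only [Pi.mul_apply, mul_comm] using hembed

theorem integrable_of_lintegral_enorm_mul_logWeight_lt_top {α : ℝ} (hα : 0 ≤ α)
    (hμ : ∀ᵐ t ∂μ, t ∈ Ico (0 : ℝ) 1) (hf : ContinuousOn f (ball 0 1))
    (hfin : ∫⁻ t, ‖f t‖ₑ * ENNReal.ofReal (logWeight α t) ∂μ < ⊤) :
    Integrable (fun t : ℝ => f t) μ := by
  have hmeas : AEStronglyMeasurable (fun t : ℝ => f t) μ := by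
    rw [← Measure.restrict_eq_self_of_ae_mem hμ]
    refine ContinuousOn.aestronglyMeasurable (hf.comp (by fun_prop) fun t ht => ?_)
      measurableSet_Ico
    simpa [abs_of_nonneg ht.1] using ht.2
  refine ⟨hmeas, ?_⟩
  have hzero : (0 : ℝ) ∈ Ico (0 : ℝ) 1 := ⟨le_rfl, one_pos⟩
  have hmin : ENNReal.ofReal (logWeight α 0) ≠ 0 :=
    (ENNReal.ofReal_pos.2 (logWeight_pos α hzero)).ne'
  refine ENNReal.lt_top_of_mul_ne_top_left (b := ENNReal.ofReal (logWeight α 0)) ?_ hmin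
  rw [← lintegral_mul_const' _ _ ENNReal.ofReal_ne_top]
  refine ((lintegral_mono_ae ?_).trans_lt hfin).ne
  filter_upwards [hμ] with t ht
  gcongr
  exact logWeight_monotoneOn hα hzero ht ht.1

theorem exists_lintegral_deriv_Imu_mul_logWeight_le [SFinite μ] {α : ℝ} (hα : 0 < α)
    (hμ : ∀ᵐ t ∂μ, t ∈ Ico (0 : ℝ) 1) :
    ∃ K > 0, ∀ f : ℂ → ℂ, Integrable (fun t : ℝ => f t) μ →
      ∫⁻ z in ball (0 : ℂ) 1, ‖deriv (Imu μ f) z‖ₑ * ENNReal.ofReal (logWeight (α - 1) ‖z‖) ∂dA ≤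
        ENNReal.ofReal K * ∫⁻ t, ‖f t‖ₑ * ENNReal.ofReal (logWeight α t) ∂μ := by
  obtain ⟨K, hK, hkernel⟩ := exists_setLIntegral_ball_logWeight_le hα
  refine ⟨K, hK, fun f hf => ?_⟩
  have hμ₁ : ∀ᵐ t ∂μ, |t| ≤ 1 := hμ.mono fun t ht => (abs_of_nonneg ht.1).trans_le ht.2.le
  rw [← lintegral_const_mul' _ _ ENNReal.ofReal_ne_top]
  refine (lintegral_deriv_Imu_le hμ₁ hf (by fun_prop)).trans (lintegral_mono_ae ?_)
  filter_upwards [hμ] with t ht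
  rw [mul_left_comm, ← ENNReal.ofReal_mul hK.le]
  gcongr
  exact hkernel t ht

end Operator

theorem hmu_H1_to_D1log_general (α : ℝ) (hα : 0 < α)
    (μ : Measure ℝ) [IsFiniteMeasure μ] (hsupp : μ (Ico (0 : ℝ) 1)ᶜ = 0)
    (hμ : ∃ C > 0, ∀ t ∈ Ico (0 : ℝ) 1,
      (μ (Ico t 1)).toReal * (Real.log (2 / (1 - t))) ^ α ≤ C * (1 - t)) :
    ∃ C > 0, ∀ f : ℂ → ℂ, DifferentiableOn ℂ f (ball (0 : ℂ) 1) → hardyNorm f < ⊤ →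
      (∀ z ∈ ball (0 : ℂ) 1, Integrable (fun t : ℝ => f (t : ℂ) / (1 - (t : ℂ) * z)) μ) ∧
      DifferentiableOn ℂ (Imu μ f) (ball (0 : ℂ) 1) ∧
      (∫⁻ z in ball (0 : ℂ) 1,
          ENNReal.ofReal (‖deriv (Imu μ f) z‖ * (Real.log (2 / (1 - ‖z‖))) ^ (α - 1)) ∂dA)
        ≤ ENNReal.ofReal C * hardyNorm f := by
  have hae : ∀ᵐ t ∂μ, t ∈ Ico (0 : ℝ) 1 := ae_iff.2 hsupp
  have hae₁ : ∀ᵐ t ∂μ, |t| ≤ 1 := hae.mono fun t ht => (abs_of_nonneg ht.1).trans_le ht.2.le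
  obtain ⟨C₀, hC₀, hμ⟩ := hμ
  obtain ⟨C, hC, hcarleson⟩ := exists_isRadialCarleson_withDensity_logWeight hα.le hC₀ hμ
  obtain ⟨K, hK, hderiv⟩ := exists_lintegral_deriv_Imu_mul_logWeight_le hα hae
  refine ⟨K * (16 * C), by positivity, fun f hf hH => ?_⟩
  have hembed := lintegral_enorm_mul_logWeight_le hae hcarleson hf
  have hint : Integrable (fun t : ℝ => f t) μ :=
    integrable_of_lintegral_enorm_mul_logWeight_lt_top hα.le hae hf.continuousOn
      (hembed.trans_lt (by finiteness))
  refine ⟨fun z hz => integrable_div_one_sub_mul hae₁ hint hz, fun z hz =>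
    (hasDerivAt_Imu hae₁ hint hz).differentiableAt.differentiableWithinAt, ?_⟩
  simp only [ENNReal.ofReal_mul (norm_nonneg _), ofReal_norm]
  calc _ ≤ ENNReal.ofReal K * ∫⁻ t, ‖f t‖ₑ * ENNReal.ofReal (logWeight α t) ∂μ := hderiv f hint
    _ ≤ ENNReal.ofReal K * (16 * C * hardyNorm f) := by gcongr
    _ = ENNReal.ofReal (K * (16 * C)) * hardyNorm f := by
      rw [ENNReal.ofReal_mul hK.le, ENNReal.ofReal_mul (by positivity), ENNReal.ofReal_coe_nnreal,
        ENNReal.ofReal_ofNat, mul_assoc (ENNReal.ofReal K)]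

/-- If `0 < α < 1` and `μ` is an `α`-logarithmic `1`-Carleson measure, then
there is `C > 0` such that for every `f ∈ H¹` the function `I_μ f` is well defined and
analytic in `𝔻` and `∫_𝔻 |(I_μ f)′(z)| (log(2/(1-|z|)))^{α-1} dA(z) ≤ C ‖f‖_{H¹}`. -/
theorem hmu_H1_to_D1log (α : ℝ) (hα0 : 0 < α) (hα1 : α < 1)
    (μ : Measure ℝ) [IsFiniteMeasure μ] (hsupp : μ (Ico (0 : ℝ) 1)ᶜ = 0)
    (hμ : ∃ C > 0, ∀ t ∈ Ico (0 : ℝ) 1,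
      (μ (Ico t 1)).toReal * (Real.log (2 / (1 - t))) ^ α ≤ C * (1 - t)) :
    ∃ C > 0, ∀ f : ℂ → ℂ, DifferentiableOn ℂ f (ball (0 : ℂ) 1) → hardyNorm f < ⊤ →
      (∀ z ∈ ball (0 : ℂ) 1, Integrable (fun t : ℝ => f (t : ℂ) / (1 - (t : ℂ) * z)) μ) ∧
      DifferentiableOn ℂ (Imu μ f) (ball (0 : ℂ) 1) ∧
      (∫⁻ z in ball (0 : ℂ) 1,
          ENNReal.ofReal (‖deriv (Imu μ f) z‖ * (Real.log (2 / (1 - ‖z‖))) ^ (α - 1)) ∂dA)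
        ≤ ENNReal.ofReal C * hardyNorm f :=
  hmu_H1_to_D1log_general α hα0 μ hsupp hμ
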